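/- arXiv:1407.6305 — 2 statements merged into one kernel-verified Lean document; each statement's English description precedes it below -/
import Mathlib

section
/- Let H be a complex Hilbert space and let T be a densely defined self-adjoint operator on H (i.e. T† = T). Let ν ∈ ℝ and suppose that the range {Tu − νu : u ∈ Dom T} is a closed subspace of H. Then either ν is an eigenvalue of T, i.e. there exists u ∈ Dom T with u ≠ 0 and Tu = νu, or the operator T − ν : Dom T → H is bijective with bounded inverse: every v ∈ H can be written as v = Tu − νu for a unique u ∈ Dom T, and there is a constant c > 0 with ‖u‖ ≤ c‖Tu − νu‖ for all u ∈ Dom T. -/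
/-- Let `H` be a complex Hilbert space and `T` a densely defined self-adjoint
operator on `H` (i.e. `T† = T`).  Let `ν ∈ ℝ` and suppose the range
`{T u - ν u : u ∈ Dom T}` is a closed subspace of `H`.  Then either `ν` is an eigenvalue
of `T`, or `T - ν : Dom T → H` is bijective with bounded inverse: every `v ∈ H` is
`T u - ν u` for a unique `u ∈ Dom T` and there is `c > 0` with `‖u‖ ≤ c ‖T u - ν u‖`
for all `u ∈ Dom T`. -/
theorem stmt4 {H : Type*}
    [NormedAddCommGroup H] [InnerProductSpace ℂ H] [CompleteSpace H]
    (T : H →ₗ.[ℂ] H)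
    (hdense : Dense (T.domain : Set H))
    (hsa : IsSelfAdjoint T)
    (ν : ℝ)
    (hran : IsClosed {v : H | ∃ u : T.domain, T u - (ν : ℂ) • (u : H) = v}) :
    (∃ u : T.domain, (u : H) ≠ 0 ∧ T u = (ν : ℂ) • (u : H)) ∨
      ((∀ v : H, ∃! u : T.domain, T u - (ν : ℂ) • (u : H) = v) ∧
        ∃ c > 0, ∀ u : T.domain, ‖(u : H)‖ ≤ c * ‖T u - (ν : ℂ) • (u : H)‖) := by
  have hsa' : T.adjoint = T := hsa
  have key : ∀ w z : H, (∀ x : T.domain, inner ℂ z (x : H) = inner ℂ w (T x)) →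
      ∃ u : T.domain, (u : H) = w ∧ T u = z := by
    intro w z h
    have h1 : ∃ u : T.adjoint.domain, (u : H) = w ∧ T.adjoint u = z :=
      ⟨⟨w, LinearPMap.mem_adjoint_domain_of_exists w ⟨z, h⟩⟩, rfl,
        LinearPMap.adjoint_apply_eq hdense _ h⟩
    rwa [hsa'] at h1
  have hsym : T.IsFormalAdjoint T := by
    have h1 := LinearPMap.adjoint_isFormalAdjoint hdense
    rwa [hsa'] at h1
  by_cases hE : ∃ u : T.domain, (u : H) ≠ 0 ∧ T u = (ν : ℂ) • (u : H)
  · exact Or.inl hE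
  right
  push Not at hE
  let S : T.domain →ₗ[ℂ] H := T.toFun - (ν : ℂ) • T.domain.subtype
  have hS : ∀ u : T.domain, S u = T u - (ν : ℂ) • (u : H) := fun u => rfl
  have hSsym : ∀ x y : T.domain, inner ℂ (S x) (y : H) = inner ℂ (x : H) (S y) := by
    intro x y
    rw [hS, hS, inner_sub_left, inner_sub_right, hsym x y, inner_smul_left, inner_smul_right,
      Complex.conj_ofReal]
  have hinj : Function.Injective S := by
    rw [← LinearMap.ker_eq_bot, LinearMap.ker_eq_bot']
    intro u hu
    rw [hS, sub_eq_zero] at hu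
    by_contra h0
    exact hE u (fun h => h0 (Subtype.ext h)) hu
  have hcl : IsClosed (LinearMap.range S : Set H) := hran
  have htop : LinearMap.range S = ⊤ := by
    haveI : CompleteSpace (LinearMap.range S) := hcl.completeSpace_coe
    rw [← Submodule.orthogonal_eq_bot_iff, Submodule.eq_bot_iff]
    intro w hw
    have hw' : ∀ x : T.domain, inner ℂ ((ν : ℂ) • w) (x : H) = inner ℂ w (T x) := by
      intro x
      have h1 := (Submodule.mem_orthogonal' _ _).1 hw (S x) ⟨x, rfl⟩
      rw [hS, inner_sub_right, inner_smul_right, sub_eq_zero] at h1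
      rw [inner_smul_left, Complex.conj_ofReal, h1]
    obtain ⟨u, hu, hTu⟩ := key w _ hw'
    by_contra h0
    exact hE u (by rwa [hu]) (by rw [hTu, hu])
  have hsurj : Function.Surjective S := LinearMap.range_eq_top.1 htop
  let e : T.domain ≃ₗ[ℂ] H := LinearEquiv.ofBijective S ⟨hinj, hsurj⟩
  have he : ∀ u, e u = S u := fun u => rfl
  let G : H →ₗ[ℂ] H := T.domain.subtype ∘ₗ e.symm.toLinearMap
  have hG : ∀ v, G v = (e.symm v : H) := fun v => rfl
  have hGsym : G.IsSymmetric := by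
    intro v w
    have h1 := hSsym (e.symm v) (e.symm w)
    rw [← he, ← he, e.apply_symm_apply, e.apply_symm_apply] at h1
    rw [hG, hG, h1]
  have hGc : Continuous G := hGsym.continuous
  refine ⟨fun v => ?_, ?_⟩
  · obtain ⟨u, hu⟩ := hsurj v
    exact ⟨u, hu, fun y hy => hinj ((show S y = v from hy).trans hu.symm)⟩
  · obtain ⟨c, hc, hb⟩ := (⟨G, hGc⟩ : H →L[ℂ] H).bound
    refine ⟨c, hc, fun u => ?_⟩
    have h1 : ‖G (S u)‖ ≤ c * ‖S u‖ := hb (S u)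
    rwa [hG, ← he, e.symm_apply_apply] at h1
end

section
/- Let H₀, H₁, H₂ be complex Hilbert spaces and let d₀ (from H₀ to H₁) and d₁ (from H₁ to H₂) be densely defined linear operators forming a complex, i.e. d₀(Dom d₀) ⊆ Dom d₁ and d₁(d₀ x) = 0 for all x ∈ Dom d₀. Let u ∈ Dom d₁ ∩ Dom d₀†. Suppose w ∈ Dom d₁† satisfies d₁† w ∈ Dom d₁ and d₁(d₁† w) = d₁ u, and suppose v ∈ Dom d₀ satisfies d₀ v ∈ Dom d₀† and d₀†(d₀ v) = d₀† u. Then d₁† w ∈ Dom d₀† with d₀†(d₁† w) = 0, and the element r := u − d₁† w − d₀ v satisfies r ∈ Dom d₁ ∩ Dom d₀†, d₁ r = 0, and d₀† r = 0 (i.e. u − d₁† w − d₀ v is a harmonic element of the complex). -/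
/-- Let `H₀, H₁, H₂` be complex Hilbert spaces and `d₀ : H₀ → H₁`,
`d₁ : H₁ → H₂` densely defined operators forming a complex (`d₀ (Dom d₀) ⊆ Dom d₁` and
`d₁ ∘ d₀ = 0`).  Let `u ∈ Dom d₁ ∩ Dom d₀†`.  If `w ∈ Dom d₁†` satisfies
`d₁† w ∈ Dom d₁` and `d₁ (d₁† w) = d₁ u`, and `v ∈ Dom d₀` satisfies `d₀ v ∈ Dom d₀†`
and `d₀† (d₀ v) = d₀† u`, then `d₁† w ∈ Dom d₀†` with `d₀† (d₁† w) = 0`, and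
`r := u - d₁† w - d₀ v` satisfies `r ∈ Dom d₁ ∩ Dom d₀†`, `d₁ r = 0` and `d₀† r = 0`. -/
theorem stmt11 {H₀ H₁ H₂ : Type*}
    [NormedAddCommGroup H₀] [InnerProductSpace ℂ H₀] [CompleteSpace H₀]
    [NormedAddCommGroup H₁] [InnerProductSpace ℂ H₁] [CompleteSpace H₁]
    [NormedAddCommGroup H₂] [InnerProductSpace ℂ H₂] [CompleteSpace H₂]
    (d₀ : H₀ →ₗ.[ℂ] H₁) (d₁ : H₁ →ₗ.[ℂ] H₂)
    (hdense₀ : Dense (d₀.domain : Set H₀))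
    (hdense₁ : Dense (d₁.domain : Set H₁))
    (hcomp : ∀ x : d₀.domain, d₀ x ∈ d₁.domain)
    (hzero : ∀ x : d₀.domain, d₁ ⟨d₀ x, hcomp x⟩ = 0)
    (u : H₁) (hu₁ : u ∈ d₁.domain) (hu₀ : u ∈ d₀.adjoint.domain)
    (w : d₁.adjoint.domain)
    (hw : d₁.adjoint w ∈ d₁.domain)
    (hweq : d₁ ⟨d₁.adjoint w, hw⟩ = d₁ ⟨u, hu₁⟩)
    (v : d₀.domain)
    (hv : d₀ v ∈ d₀.adjoint.domain)
    (hveq : d₀.adjoint ⟨d₀ v, hv⟩ = d₀.adjoint ⟨u, hu₀⟩) :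
    ∃ h₁ : d₁.adjoint w ∈ d₀.adjoint.domain,
      d₀.adjoint ⟨d₁.adjoint w, h₁⟩ = 0 ∧
      ∃ (h₂ : u - d₁.adjoint w - d₀ v ∈ d₁.domain)
        (h₃ : u - d₁.adjoint w - d₀ v ∈ d₀.adjoint.domain),
        d₁ ⟨u - d₁.adjoint w - d₀ v, h₂⟩ = 0 ∧
        d₀.adjoint ⟨u - d₁.adjoint w - d₀ v, h₃⟩ = 0 := by
  have key : ∀ x : d₀.domain, inner ℂ (0 : H₀) (x : H₀) = inner ℂ (d₁.adjoint w) (d₀ x) := by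
    intro x
    have h := LinearPMap.adjoint_isFormalAdjoint hdense₁ w ⟨d₀ x, hcomp x⟩
    rw [hzero x, inner_zero_right] at h
    rw [inner_zero_left]
    exact h.symm
  have h₁ : d₁.adjoint w ∈ d₀.adjoint.domain :=
    LinearPMap.mem_adjoint_domain_of_exists _ ⟨0, key⟩
  have e₁ : d₀.adjoint ⟨d₁.adjoint w, h₁⟩ = 0 :=
    LinearPMap.adjoint_apply_eq hdense₀ _ key
  refine ⟨h₁, e₁, sub_mem (sub_mem hu₁ hw) (hcomp v), sub_mem (sub_mem hu₀ h₁) hv, ?_, ?_⟩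
  · change d₁ ((⟨u, hu₁⟩ - ⟨d₁.adjoint w, hw⟩) - ⟨d₀ v, hcomp v⟩ : d₁.domain) = 0
    rw [LinearPMap.map_sub, LinearPMap.map_sub, hweq, hzero, sub_self, sub_zero]
  · change d₀.adjoint ((⟨u, hu₀⟩ - ⟨d₁.adjoint w, h₁⟩) - ⟨d₀ v, hv⟩ : d₀.adjoint.domain) = 0
    rw [LinearPMap.map_sub, LinearPMap.map_sub, hveq, e₁, sub_zero, sub_self]
end
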